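/- arXiv:2202.06195 — 2 statements merged into one kernel-verified Lean document; each statement's English description precedes it below -/
import Mathlib

section
/- For every integer d ≥ 2, the iterated sum over integers n₁ ≥ n₂ ≥ ⋯ ≥ n_d ≥ 0 of 2^{n₁} / (binom(2n₁, n₁) · (2n₁+1)(2n₂+1)⋯(2n_d+1)) equals 2 β(d), where β(s) = ∑_{k=0}^∞ (−1)^k/(2k+1)^s is the Dirichlet beta function. -/
open Real

/-!
Euler's transformation `∑ₙ 2⁻ⁿ ∑ₖ C(n,k) bₖ = 2 ∑ₖ bₖ` is applied to `bₖ = (-1)ᵏ / (2k+1)ᵈ`. The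
binomial transforms `T` of these sequences factor. Indeed, for a linear function `q k = a k + c`,
the transforms of `f` and of `q f` are related by
`q (n+1) T f (n+1) = a (n+1) T f n + T (q f) (n+1)`. For `f = (-1)ᵏ / q(k)ᵈ` this is, up to the
factor `T ((-1)ᵏ / q) n`, the recursion of the complete homogeneous sums of degree `d - 1` in
`1 / q 0, …, 1 / q n`, that is, of the sums of `∏ 1 / q nⱼ` over `n ≥ n₂ ≥ ⋯ ≥ n_d ≥ 0`. For
`q k = 2k+1` the factor is `4ⁿ / (C(2n,n) (2n+1))`.
-/

open Finset Matrix
open scoped Nat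

section BinomialTransform

/-- The binomial transform `n ↦ ∑ₖ C(n,k) bₖ` of a sequence `b`, without alternating signs. -/
def binomialTransform {M : Type*} [AddCommMonoid M] (b : ℕ → M) (n : ℕ) : M :=
  ∑ k ∈ range (n + 1), n.choose k • b k

lemma binomialTransform_zero {M : Type*} [AddCommMonoid M] (b : ℕ → M) :
    binomialTransform b 0 = b 0 := by
  simp [binomialTransform]

lemma linear_mul_binomialTransform_succ {R : Type*} [CommRing R] (a c : R) (b : ℕ → R) (n : ℕ) :
    (a * (n + 1) + c) * binomialTransform b (n + 1) =
      a * (n + 1) * binomialTransform b n +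
        binomialTransform (fun k ↦ (a * k + c) * b k) (n + 1) := by
  have extend : binomialTransform b n = ∑ k ∈ range (n + 1 + 1), n.choose k • b k := by
    simp [binomialTransform, sum_range_succ _ (n + 1)]
  rw [extend]
  simp only [binomialTransform, mul_sum, ← sum_add_distrib, nsmul_eq_mul]
  refine sum_congr rfl fun k hk ↦ ?_
  have hk' : k ≤ n + 1 := by grind
  have absorption : (n.choose k : R) * (n + 1) = (n + 1).choose k * (n + 1 - k) := by
    simpa [Nat.cast_sub hk'] using congrArg (Nat.cast (R := R)) (Nat.choose_mul_succ_eq n k)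
  linear_combination (-a * b k) * absorption

end BinomialTransform

section EulerTransform

lemma hasSum_choose_div_two_pow (k : ℕ) : HasSum (fun n : ℕ ↦ (n.choose k : ℝ) / 2 ^ n) 2 := by
  have vanish : ∑ n ∈ range k, (n.choose k : ℝ) / 2 ^ n = 0 :=
    sum_eq_zero fun n hn ↦ by simp [Nat.choose_eq_zero_of_lt (mem_range.1 hn)]
  have shifted := (hasSum_choose_mul_geometric_of_norm_lt_one k
    (r := (2⁻¹ : ℝ)) (by norm_num)).mul_left (2⁻¹ ^ k)
  rw [← hasSum_nat_add_iff' k, vanish, sub_zero]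
  convert! shifted using 1
  · ext n
    rw [pow_add, inv_pow, inv_pow]
    field_simp
  · rw [show (1 - 2⁻¹ : ℝ) = 2⁻¹ by norm_num, pow_succ]
    field_simp

variable {E : Type*} [NormedAddCommGroup E] [NormedSpace ℝ E]

lemma summable_choose_div_two_pow_smul [CompleteSpace E] {b : ℕ → E}
    (hb : Summable fun k ↦ ‖b k‖) :
    Summable fun p : ℕ × ℕ ↦ ((p.2.choose p.1 : ℝ) / 2 ^ p.2) • b p.1 := by
  have row (k : ℕ) : HasSum (fun n : ℕ ↦ ‖((n.choose k : ℝ) / 2 ^ n) • b k‖) (2 * ‖b k‖) := by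
    simpa [norm_smul] using (hasSum_choose_div_two_pow k).mul_right ‖b k‖
  refine .of_norm ((summable_prod_of_nonneg fun _ ↦ norm_nonneg _).2
    ⟨fun k ↦ (row k).summable, ?_⟩)
  simpa only [(row _).tsum_eq] using hb.mul_left 2

theorem hasSum_binomialTransform_div_two_pow [CompleteSpace E] {b : ℕ → E}
    (hb : Summable fun k ↦ ‖b k‖) :
    HasSum (fun n ↦ ((2 : ℝ) ^ n)⁻¹ • binomialTransform b n) ((2 : ℝ) • ∑' k, b k) := by
  obtain ⟨S, hS⟩ := summable_choose_div_two_pow_smul hb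
  have rows : HasSum (fun k ↦ (2 : ℝ) • b k) S :=
    hS.prod_fiberwise fun k ↦ (hasSum_choose_div_two_pow k).smul_const (b k)
  rw [← hb.of_norm.tsum_const_smul (2 : ℝ), rows.tsum_eq]
  refine ((Equiv.prodComm ℕ ℕ).hasSum_iff.2 hS).prod_fiberwise fun n ↦ ?_
  have outside (k : ℕ) (hk : k ∉ range (n + 1)) : ((n.choose k : ℝ) / 2 ^ n) • b k = 0 := by
    simp [Nat.choose_eq_zero_of_lt (show n < k by simpa using hk)]
  have column : ((2 : ℝ) ^ n)⁻¹ • binomialTransform b n =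
      ∑ k ∈ range (n + 1), ((n.choose k : ℝ) / 2 ^ n) • b k := by
    simp only [binomialTransform, smul_sum, ← Nat.cast_smul_eq_nsmul ℝ, smul_smul, div_eq_inv_mul]
  rw [column]
  exact hasSum_sum_of_ne_finset_zero outside

end EulerTransform

section NestedSum

/-- The nested sum `∑_{N ≥ m₁ ≥ ⋯ ≥ m_d ≥ 0} x(m₁) ⋯ x(m_d)`, i.e. the complete homogeneous
symmetric polynomial of degree `d` in `x 0, …, x N`, by recursion on the outermost index. -/
def nestedSum {R : Type*} [CommSemiring R] (x : ℕ → R) : ℕ → ℕ → R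
  | 0, _ => 1
  | d + 1, N => ∑ m ∈ range (N + 1), x m * nestedSum x d m

lemma nestedSum_succ_zero {R : Type*} [CommSemiring R] (x : ℕ → R) (d : ℕ) :
    nestedSum x (d + 1) 0 = x 0 * nestedSum x d 0 := by
  simp [nestedSum]

lemma nestedSum_succ_succ {R : Type*} [CommSemiring R] (x : ℕ → R) (d N : ℕ) :
    nestedSum x (d + 1) (N + 1) = nestedSum x (d + 1) N + x (N + 1) * nestedSum x d (N + 1) :=
  sum_range_succ _ _

/-- Tuples with a given property, as pairs of a head and a tail. -/
def sigmaVecConsEquiv {α : Type*} {d : ℕ} (p : (Fin (d + 1) → α) → Prop) :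
    (Σ m, {f : Fin d → α // p (vecCons m f)}) ≃ {f : Fin (d + 1) → α // p f} :=
  (Equiv.subtypeProdEquivSigmaSubtype fun m f ↦ p (vecCons m f)).symm.trans
    ((Fin.consEquiv fun _ ↦ α).subtypeEquiv fun _ ↦ Iff.rfl)

lemma hasSum_subtype_of_hasSum_vecCons {α : Type*} {d : ℕ} {p : (Fin (d + 1) → α) → Prop}
    {F : (Fin (d + 1) → α) → ℝ} (hF : ∀ f, 0 ≤ F f) {s : α → ℝ} {S : ℝ}
    (hs : ∀ m, HasSum (fun f : {f : Fin d → α // p (vecCons m f)} ↦ F (vecCons m f)) (s m))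
    (hS : HasSum s S) :
    HasSum (fun f : {f // p f} ↦ F f) S := by
  rw [← (sigmaVecConsEquiv p).hasSum_iff]
  refine hS.sigma_of_hasSum hs ((summable_sigma_of_nonneg fun _ ↦ hF _).2
    ⟨fun m ↦ (hs m).summable, ?_⟩)
  exact hS.summable.congr fun m ↦ (hs m).tsum_eq.symm

lemma hasSum_antitone_vecCons_vecCons {d m : ℕ} {F : (Fin d → ℕ) → ℝ} {S : ℝ}
    (hS : HasSum (fun f : {f : Fin d → ℕ // Antitone (vecCons m f)} ↦ F f) S) (N : ℕ) :
    HasSum (fun f : {f : Fin d → ℕ // Antitone (vecCons N (vecCons m f))} ↦ F f)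
      (if m ≤ N then S else 0) := by
  have bounded_iff (f : Fin d → ℕ) :
      Antitone (vecCons N (vecCons m f)) ↔ m ≤ N ∧ Antitone (vecCons m f) := by
    simp
  split_ifs with hm
  · have tail_iff (f : Fin d → ℕ) :
        Antitone (vecCons m f) ↔ Antitone (vecCons N (vecCons m f)) := by
      simp only [bounded_iff, hm, true_and]
    exact (Equiv.subtypeEquivRight tail_iff).hasSum_iff.1 hS
  · have : IsEmpty {f : Fin d → ℕ // Antitone (vecCons N (vecCons m f))} :=
      ⟨fun f ↦ hm ((bounded_iff f).1 f.2).1⟩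
    exact hasSum_empty

variable {x : ℕ → ℝ}

-- Antitonicity of `vecCons N f` encodes `N ≥ f 0 ≥ f 1 ≥ ⋯` uniformly, including `d = 0`.
lemma hasSum_prod_antitone_vecCons (hx : ∀ m, 0 ≤ x m) (d N : ℕ) :
    HasSum (fun f : {f : Fin d → ℕ // Antitone (vecCons N f)} ↦ ∏ j, x (f.1 j))
      (nestedSum x d N) := by
  induction d generalizing N with
  | zero =>
    exact hasSum_single ⟨vecEmpty, antitone_vecEmpty⟩ fun f hf ↦ (hf (Subsingleton.elim _ _)).elim
  | succ d ih =>
    have head (m : ℕ) :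
        HasSum (fun f : {f : Fin d → ℕ // Antitone (vecCons N (vecCons m f))} ↦
          ∏ j, x (vecCons m f.1 j)) (if m ≤ N then x m * nestedSum x d m else 0) :=
      hasSum_antitone_vecCons_vecCons (F := fun f ↦ ∏ j, x (vecCons m f j))
        (by simpa [Fin.prod_univ_succ] using (ih m).mul_left (x m)) N
    refine hasSum_subtype_of_hasSum_vecCons (F := fun f ↦ ∏ j, x (f j))
      (fun f ↦ prod_nonneg fun j _ ↦ hx _) head ?_
    simp only [nestedSum, ← mem_range_succ_iff]
    rw [← sum_congr rfl fun m hm ↦ if_pos hm]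
    exact hasSum_sum_of_ne_finset_zero fun m hm ↦ if_neg hm

lemma hasSum_mul_prod_antitone {g : ℕ → ℝ} (hg : ∀ m, 0 ≤ g m) (hx : ∀ m, 0 ≤ x m) {d : ℕ} {S : ℝ}
    (hS : HasSum (fun m ↦ g m * nestedSum x d m) S) :
    HasSum (fun n : {n : Fin (d + 1) → ℕ // Antitone n} ↦
      g (n.1 0) * ∏ j : Fin d, x (n.1 j.succ)) S :=
  hasSum_subtype_of_hasSum_vecCons (F := fun n ↦ g (n 0) * ∏ j : Fin d, x (n j.succ))
    (fun n ↦ mul_nonneg (hg _) (prod_nonneg fun j _ ↦ hx _))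
    (fun m ↦ by simpa using (hasSum_prod_antitone_vecCons hx d m).mul_left (g m)) hS

end NestedSum

section BetaTerm

/-- The terms `(-1)ᵏ / (a k + c)^d` of the Dirichlet beta series for the arithmetic progression
`c, c + a, c + 2 a, …`; the classical series `β(d)` has `a = 2` and `c = 1`. -/
def betaTerm {K : Type*} [Field K] (a c : K) (d k : ℕ) : K :=
  (-1) ^ k / (a * k + c) ^ d

section Field

variable {K : Type*} [Field K]

lemma binomialTransform_betaTerm_zero_succ (a c : K) (n : ℕ) :
    binomialTransform (betaTerm a c 0) (n + 1) = 0 := by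
  simpa [binomialTransform, betaTerm, mul_comm] using
    congrArg (Int.cast (R := K)) (Int.alternating_sum_range_choose_of_ne n.succ_ne_zero)

variable {a c : K} (hq : ∀ k : ℕ, a * k + c ≠ 0)
include hq

lemma linear_mul_binomialTransform_betaTerm_succ (d n : ℕ) :
    (a * (n + 1) + c) * binomialTransform (betaTerm a c (d + 1)) (n + 1) =
      a * (n + 1) * binomialTransform (betaTerm a c (d + 1)) n +
        binomialTransform (betaTerm a c d) (n + 1) := by
  have lower : (fun k : ℕ ↦ (a * k + c) * betaTerm a c (d + 1) k) = betaTerm a c d := by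
    ext k
    have := hq k
    simp only [betaTerm, pow_succ _ d]
    field_simp
  rw [linear_mul_binomialTransform_succ, lower]

lemma binomialTransform_betaTerm_one (n : ℕ) :
    binomialTransform (betaTerm a c 1) n = a ^ n * n ! / ∏ k ∈ range (n + 1), (a * k + c) := by
  induction n with
  | zero => simp [binomialTransform_zero, betaTerm]
  | succ n ih =>
    have recurrence := linear_mul_binomialTransform_betaTerm_succ hq 0 n
    rw [binomialTransform_betaTerm_zero_succ, add_zero, zero_add, ih] at recurrence
    have hn : a * (n + 1) + c ≠ 0 := mod_cast hq (n + 1)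
    refine mul_left_cancel₀ hn (recurrence.trans ?_)
    rw [prod_range_succ _ (n + 1), Nat.factorial_succ, pow_succ]
    push_cast
    field_simp

theorem binomialTransform_betaTerm_succ (d n : ℕ) :
    binomialTransform (betaTerm a c (d + 1)) n =
      binomialTransform (betaTerm a c 1) n * nestedSum (fun k ↦ (a * k + c)⁻¹) d n := by
  induction d generalizing n with
  | zero => simp [nestedSum]
  | succ d ihd =>
    induction n with
    | zero =>
      have := ihd 0
      simp only [binomialTransform_zero, betaTerm, nestedSum_succ_zero] at this ⊢
      rw [mul_left_comm, ← this, pow_succ _ (d + 1)]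
      simp [mul_comm]
    | succ n ihn =>
      have hn : a * (n + 1) + c ≠ 0 := mod_cast hq (n + 1)
      have recurrence := linear_mul_binomialTransform_betaTerm_succ hq (d + 1) n
      have recurrence_one := linear_mul_binomialTransform_betaTerm_succ hq 0 n
      rw [binomialTransform_betaTerm_zero_succ, add_zero, zero_add] at recurrence_one
      refine mul_left_cancel₀ hn ?_
      rw [recurrence, ihn, ihd, nestedSum_succ_succ]
      push_cast
      linear_combination (-nestedSum (fun k ↦ (a * k + c)⁻¹) (d + 1) n) * recurrence_one -
        binomialTransform (betaTerm a c 1) (n + 1) *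
          nestedSum (fun k ↦ (a * k + c)⁻¹) d (n + 1) * mul_inv_cancel₀ hn

end Field

section Real

variable {a : ℝ}

lemma summable_norm_betaTerm (ha : a ≠ 0) (c : ℝ) {d : ℕ} (hd : 2 ≤ d) :
    Summable fun k ↦ ‖betaTerm a c d k‖ := by
  have shifted := (summable_one_div_nat_add_rpow (c / a) d).2 (mod_cast hd)
  refine (shifted.mul_left (|a| ^ d)⁻¹).congr fun k ↦ ?_
  have factor : a * k + c = a * (k + c / a) := by field_simp
  rw [betaTerm, norm_div, norm_pow, norm_neg, norm_one, one_pow, norm_pow, Real.norm_eq_abs, factor,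
    abs_mul, mul_pow, rpow_natCast, one_div, one_div, mul_inv]

theorem hasSum_antitone_betaTerm {c : ℝ} (ha : 0 < a) (hc : 0 < c) {d : ℕ} (hd : 1 ≤ d) :
    HasSum (fun n : {n : Fin (d + 1) → ℕ // Antitone n} ↦
      a ^ n.1 0 * (n.1 0)! / (2 ^ n.1 0 * ∏ k ∈ range (n.1 0 + 1), (a * k + c)) *
        ∏ j : Fin d, (a * n.1 j.succ + c)⁻¹)
      (2 * ∑' k, betaTerm a c (d + 1) k) := by
  have hq (k : ℕ) : 0 < a * k + c := by positivity
  refine hasSum_mul_prod_antitone (x := fun k ↦ (a * k + c)⁻¹)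
    (g := fun m ↦ a ^ m * m ! / (2 ^ m * ∏ k ∈ range (m + 1), (a * k + c)))
    (fun m ↦ ?_) (fun m ↦ (inv_pos.2 (hq m)).le) ?_
  · have := prod_pos fun k (_ : k ∈ range (m + 1)) ↦ hq k
    positivity
  · convert! hasSum_binomialTransform_div_two_pow
      (summable_norm_betaTerm ha.ne' c (Nat.succ_le_succ hd)) using 2 with m
    rw [binomialTransform_betaTerm_succ fun k ↦ (hq k).ne',
      binomialTransform_betaTerm_one fun k ↦ (hq k).ne', smul_eq_mul]
    field_simp

end Real

end BetaTerm

lemma two_pow_mul_prod_odd_eq_factorial_mul_centralBinom (n : ℕ) :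
    2 ^ n * ∏ k ∈ range n, (2 * k + 1) = n ! * n.centralBinom := by
  induction n with
  | zero => simp
  | succ n ih =>
    rw [pow_succ, prod_range_succ, Nat.factorial_succ]
    linear_combination (2 * (2 * n + 1)) * ih - n ! * Nat.succ_mul_centralBinom_succ n

lemma two_pow_mul_factorial_div_prod_odd (n : ℕ) :
    (2 : ℝ) ^ n * n ! / (2 ^ n * ∏ k ∈ range (n + 1), (2 * (k : ℝ) + 1)) =
      2 ^ n / ((2 * n).choose n * (2 * n + 1)) := by
  have h : (2 : ℝ) ^ n * ∏ k ∈ range n, (2 * (k : ℝ) + 1) = n ! * n.centralBinom :=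
    mod_cast two_pow_mul_prod_odd_eq_factorial_mul_centralBinom n
  rw [prod_range_succ, ← mul_assoc, h, ← Nat.centralBinom_eq_two_mul_choose]
  field_simp

/-- For `d ≥ 2`, the iterated sum over `n₁ ≥ ⋯ ≥ n_d ≥ 0` of
`2^{n₁} / (binom(2n₁,n₁) (2n₁+1)⋯(2n_d+1))` equals `2β(d)`,
where `β` is the Dirichlet beta function. -/
theorem stmt2 (d : ℕ) (hd : 2 ≤ d) :
    (∑' n : {n : Fin d → ℕ // Antitone n},
      ((2 : ℝ) ^ (n.1 ⟨0, by omega⟩) /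
        ((Nat.choose (2 * n.1 ⟨0, by omega⟩) (n.1 ⟨0, by omega⟩) : ℝ) *
          ∏ j : Fin d, (2 * (n.1 j : ℝ) + 1)))) =
    2 * ∑' k : ℕ, (-1 : ℝ) ^ k / (2 * (k : ℝ) + 1) ^ d := by
  obtain ⟨e, rfl⟩ : ∃ e, d = e + 1 := ⟨d - 1, by omega⟩
  change _ = 2 * ∑' k, betaTerm 2 1 (e + 1) k
  rw [← (hasSum_antitone_betaTerm two_pos one_pos (Nat.le_of_succ_le_succ hd)).tsum_eq]
  refine tsum_congr fun n ↦ ?_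
  rw [two_pow_mul_factorial_div_prod_odd, Fin.prod_univ_succ, prod_inv_distrib, ← div_eq_mul_inv,
    div_div, mul_assoc]
  rfl
end

section
/- For every integer d ≥ 1, the multiple t-star value t⋆(2,…,2) of depth d, i.e. the iterated sum over integers n₁ ≥ n₂ ≥ ⋯ ≥ n_d ≥ 1 of 1 / ((2n₁+1)²(2n₂+1)²⋯(2n_d+1)²) extended to n_d ≥ 0, namely ∑_{n₁ ≥ ⋯ ≥ n_d ≥ 0} ∏_{j=1}^d (2n_j+1)^{-2}, equals (4/π) β(2d+1), where β(s) = ∑_{k=0}^∞ (−1)^k/(2k+1)^s is the Dirichlet beta function. -/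
open Real

/-!
The sum over antitone `d`-tuples with entries at most `M` is the complete homogeneous symmetric
polynomial of degree `d` in `y₀⁻¹, …, y_M⁻¹`, where `y_k = (2k+1)²`. Its partial fraction expansion
is `∑_k λ_{M,k} y_k^{-d}`, where `λ_{M,k} = ∏_{i ≠ k} y_i / (y_i - y_k)` is the value at `0` of the
`k`-th Lagrange basis polynomial for the nodes `y₀, …, y_M`. For odd squares `λ_{M,k}` has a closed
form as a Wallis quotient times a ratio of factorials: it is bounded uniformly in `M` and `k`, and
Wallis' product gives `λ_{M,k} → (4/π) (-1)^k / (2k+1)` as `M → ∞`. Dominated convergence then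
turns the expansion into `(4/π) ∑_k (-1)^k / (2k+1)^{2d+1}`.
-/

open Filter Topology Finset
open scoped Nat

section TruncatedStarSum

open Classical in
/-- The antitone tuples `M ≥ n₀ ≥ ⋯ ≥ n_{d-1} ≥ 0`, indexing the truncations of a multiple star
sum of depth `d`. -/
noncomputable def boundedAntitone (d M : ℕ) : Finset (Fin d → ℕ) :=
  {n ∈ Fintype.piFinset fun _ ↦ range (M + 1) | Antitone n}

theorem mem_boundedAntitone {d M : ℕ} {n : Fin d → ℕ} :
    n ∈ boundedAntitone d M ↔ (∀ j, n j ≤ M) ∧ Antitone n := by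
  simp [boundedAntitone]

theorem boundedAntitone_mono (d : ℕ) : Monotone (boundedAntitone d) := fun _ _ hab n hn ↦ by
  rw [mem_boundedAntitone] at hn ⊢
  exact ⟨fun j ↦ (hn.1 j).trans hab, hn.2⟩

theorem antitone_cons_iff {α : Type*} [Preorder α] {d : ℕ} {a : α} {n : Fin d → α} :
    Antitone (Fin.cons a n : Fin (d + 1) → α) ↔ (∀ j, n j ≤ a) ∧ Antitone n := by
  simp [Antitone, Fin.forall_fin_succ, forall_and]

theorem cons_mem_boundedAntitone {d M i : ℕ} {n : Fin d → ℕ} :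
    (Fin.cons i n : Fin (d + 1) → ℕ) ∈ boundedAntitone (d + 1) M ↔
      i ≤ M ∧ n ∈ boundedAntitone d i := by
  simp only [mem_boundedAntitone, antitone_cons_iff, Fin.forall_fin_succ, Fin.cons_zero,
    Fin.cons_succ]
  exact ⟨fun h ↦ ⟨h.1.1, h.2⟩, fun h ↦ ⟨⟨h.1, fun j ↦ (h.2.1 j).trans h.1⟩, h.2⟩⟩

variable {R : Type*} [CommSemiring R]

/-- The truncated multiple star sum `∑_{M ≥ n₁ ≥ ⋯ ≥ n_d ≥ 0} x(n₁) ⋯ x(n_d)`. -/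
noncomputable def truncStarSum (x : ℕ → R) (d M : ℕ) : R :=
  ∑ n ∈ boundedAntitone d M, ∏ j, x (n j)

theorem truncStarSum_zero_left (x : ℕ → R) (M : ℕ) : truncStarSum x 0 M = 1 := by
  have : boundedAntitone 0 M = univ := by
    ext n
    simp only [mem_boundedAntitone, IsEmpty.forall_iff, Subsingleton.antitone n, mem_univ, and_self]
  simp [truncStarSum, this]

theorem truncStarSum_succ_left (x : ℕ → R) (d M : ℕ) :
    truncStarSum x (d + 1) M = ∑ i ∈ range (M + 1), x i * truncStarSum x d i := by
  simp only [truncStarSum, mul_sum]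
  rw [sum_sigma']
  refine sum_bij' (fun n _ ↦ ⟨n 0, Fin.tail n⟩) (fun p _ ↦ Fin.cons p.1 p.2) ?_ ?_ ?_ ?_ ?_
  · intro n hn
    rw [← Fin.cons_self_tail n, cons_mem_boundedAntitone] at hn
    simpa [Nat.lt_succ_iff] using hn
  · rintro ⟨i, n⟩ hp
    rw [cons_mem_boundedAntitone]
    simpa [Nat.lt_succ_iff] using hp
  · exact fun n _ ↦ Fin.cons_self_tail n
  · simp
  · exact fun n _ ↦ Fin.prod_univ_succ _

theorem truncStarSum_succ_succ (x : ℕ → R) (d M : ℕ) :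
    truncStarSum x (d + 1) (M + 1) =
      truncStarSum x (d + 1) M + x (M + 1) * truncStarSum x d (M + 1) := by
  simp only [truncStarSum_succ_left, sum_range_succ _ (M + 1)]

theorem hasSum_antitone_of_tendsto_truncStarSum {x : ℕ → ℝ} (hx : ∀ k, 0 ≤ x k) {d : ℕ} {L : ℝ}
    (h : Tendsto (truncStarSum x d) atTop (𝓝 L)) :
    HasSum (fun n : {n : Fin d → ℕ // Antitone n} ↦ ∏ j, x (n.1 j)) L := by
  classical
  let T (M : ℕ) : Finset {n : Fin d → ℕ // Antitone n} := (boundedAntitone d M).subtype Antitone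
  have hT : Tendsto T atTop atTop := by
    refine tendsto_atTop_finset_of_monotone
      (fun a b hab ↦ subtype_mono (boundedAntitone_mono d hab)) fun n ↦ ⟨∑ j, n.1 j, ?_⟩
    rw [mem_subtype, mem_boundedAntitone]
    exact ⟨fun j ↦ single_le_sum_of_canonicallyOrdered (mem_univ j), n.2⟩
  have hsum (M : ℕ) : ∑ n ∈ T M, ∏ j, x (n.1 j) = truncStarSum x d M :=
    sum_subtype_of_mem (fun n : Fin d → ℕ ↦ ∏ j, x (n j)) fun n hn ↦ (mem_boundedAntitone.mp hn).2
  have hmono : Monotone fun s : Finset {n : Fin d → ℕ // Antitone n} ↦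
      ∑ n ∈ s, ∏ j, x (n.1 j) := fun s t hst ↦
    sum_le_sum_of_subset_of_nonneg hst fun n _ _ ↦ prod_nonneg fun j _ ↦ hx _
  exact (tendsto_iff_tendsto_subseq_of_monotone hmono hT).mpr (h.congr fun M ↦ (hsum M).symm)

end TruncatedStarSum

section PartialFractions

variable {F : Type*} [Field F] {y : ℕ → F}

/-- The value at `0` of the `k`-th Lagrange basis polynomial for the nodes `y 0, …, y M`: the
coefficients of the partial fraction expansion of the truncated star sums of `y⁻¹`. Meaningful for
`k ≤ M` only. -/
noncomputable def lagrangeWeight (y : ℕ → F) (M k : ℕ) : F :=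
  (Lagrange.basis (range (M + 1)) y k).eval 0

theorem lagrangeWeight_eq_prod (y : ℕ → F) (M k : ℕ) :
    lagrangeWeight y M k = ∏ i ∈ (range (M + 1)).erase k, y i / (y i - y k) := by
  rw [lagrangeWeight, Lagrange.basis, Polynomial.eval_prod]
  refine prod_congr rfl fun i _ ↦ ?_
  rw [← neg_sub (y k), div_neg, div_eq_inv_mul]
  simp [Lagrange.basisDivisor]

theorem lagrangeWeight_self (y : ℕ → F) (k : ℕ) :
    lagrangeWeight y k k = ∏ i ∈ range k, y i / (y i - y k) := by
  rw [lagrangeWeight_eq_prod, range_add_one, erase_insert notMem_range_self]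

theorem lagrangeWeight_succ (y : ℕ → F) {M k : ℕ} (hk : k ≤ M) :
    lagrangeWeight y (M + 1) k = lagrangeWeight y M k * (y (M + 1) / (y (M + 1) - y k)) := by
  rw [lagrangeWeight_eq_prod, range_add_one, erase_insert_of_ne (by lia),
    prod_insert (by simp), mul_comm, lagrangeWeight_eq_prod]

theorem lagrangeWeight_eq_mul {M k : ℕ} (hk : k ≤ M) (hne : y (M + 1) ≠ y k)
    (h0 : y (M + 1) ≠ 0) :
    lagrangeWeight y M k = lagrangeWeight y (M + 1) k * (1 - y k * (y (M + 1))⁻¹) := by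
  have hsub : y (M + 1) - y k ≠ 0 := sub_ne_zero.mpr hne
  rw [lagrangeWeight_succ y hk]
  field_simp

theorem sum_lagrangeWeight (hy : y.Injective) (M : ℕ) :
    ∑ k ∈ range (M + 1), lagrangeWeight y M k = 1 := by
  simp only [lagrangeWeight, ← Polynomial.eval_finsetSum]
  rw [Lagrange.sum_basis hy.injOn nonempty_range_add_one, Polynomial.eval_one]

theorem truncStarSum_inv_eq_sum_lagrangeWeight (hy : y.Injective) (hy0 : ∀ k, y k ≠ 0)
    (d M : ℕ) :
    truncStarSum (fun k ↦ (y k)⁻¹) d M =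
      ∑ k ∈ range (M + 1), lagrangeWeight y M k * (y k)⁻¹ ^ d := by
  induction d generalizing M with
  | zero => simp [truncStarSum_zero_left, sum_lagrangeWeight hy]
  | succ d ihd =>
    induction M with
    | zero =>
      simp only [truncStarSum_succ_left, ihd, zero_add, sum_range_one]
      ring
    | succ M ihM =>
      rw [truncStarSum_succ_succ, ihM, ihd, sum_range_succ _ (M + 1), sum_range_succ _ (M + 1),
        mul_add, mul_sum, ← add_assoc, ← sum_add_distrib]
      congr 1
      · refine sum_congr rfl fun k hk ↦ ?_
        have := hy0 k
        have hkM : k ≤ M := mem_range_succ_iff.mp hk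
        rw [lagrangeWeight_eq_mul hkM (hy.ne (by lia)) (hy0 _), pow_succ]
        field_simp
        ring
      · ring

end PartialFractions

section FactorialRatios

theorem succ_descFactorial_div_ascFactorial {m n k : ℕ} (hk : k ≤ m) :
    ((m + 1).descFactorial k / (n + 2).ascFactorial k : ℝ) =
      m.descFactorial k / (n + 1).ascFactorial k *
        ((m + 1) * (n + 1) / ((m + 1 - k) * (n + 1 + k))) := by
  have hdesc : ((m : ℝ) + 1 - k) * (m + 1).descFactorial k = (m + 1) * m.descFactorial k := by
    have := congrArg (Nat.cast (R := ℝ)) (Nat.succ_descFactorial m k)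
    push_cast [hk.trans m.le_succ] at this
    exact this
  have hasc : ((n : ℝ) + 1) * (n + 2).ascFactorial k =
      (n + 1 + k) * (n + 1).ascFactorial k :=
    mod_cast Nat.succ_ascFactorial (n + 1) k
  have hsub : (m : ℝ) + 1 - k ≠ 0 := sub_ne_zero.mpr (mod_cast (Nat.lt_succ_of_le hk).ne')
  rw [div_mul_div_comm, div_eq_div_iff (by positivity) (by positivity)]
  linear_combination
    (n + 1).ascFactorial k * (n + 1 + k : ℝ) * hdesc - (m + 1) * m.descFactorial k * hasc

theorem descFactorial_div_ascFactorial_le_one {m n : ℕ} (h : m ≤ n) (k : ℕ) :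
    (m.descFactorial k / n.ascFactorial k : ℝ) ≤ 1 := by
  refine div_le_one_of_le₀ ?_ (Nat.cast_nonneg _)
  exact_mod_cast (Nat.descFactorial_le_pow m k).trans
    ((Nat.pow_le_pow_left h k).trans (Nat.pow_succ_le_ascFactorial n k))

theorem tendsto_descFactorial_div_ascFactorial (a k : ℕ) :
    Tendsto (fun n : ℕ ↦ (n.descFactorial k / (n + a).ascFactorial k : ℝ)) atTop (𝓝 1) := by
  induction k with
  | zero => simp
  | succ k ih =>
    have hratio : Tendsto (fun n : ℕ ↦ ((n : ℝ) - k) / (n + a + k)) atTop (𝓝 1) := by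
      simpa [sub_eq_add_neg, add_comm, add_left_comm, add_assoc] using
        tendsto_add_mul_div_add_mul_atTop_nhds (-k : ℝ) (a + k) 1 one_ne_zero
    rw [← one_mul (1 : ℝ)]
    refine (hratio.mul ih).congr' ?_
    filter_upwards [eventually_ge_atTop k] with n hn
    rw [Nat.descFactorial_succ, Nat.ascFactorial_succ, div_mul_div_comm]
    push_cast [hn]
    rfl

end FactorialRatios

section WallisQuotient

/-- The quotient through which Wallis' product produces the factor `4/π`; it is the partial
fraction coefficient at the node `1` among the odd squares up to `(2M+1)²`. -/
noncomputable def wallisQuotient (M : ℕ) : ℝ := (2 * M + 1) / (M + 1) / Wallis.W M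

theorem wallisQuotient_pos (M : ℕ) : 0 < wallisQuotient M :=
  div_pos (by positivity) (Wallis.W_pos M)

theorem wallisQuotient_succ (M : ℕ) :
    wallisQuotient (M + 1) =
      wallisQuotient M * ((2 * M + 3) ^ 2 / (4 * ((M + 1) * (M + 2)))) := by
  have := (Wallis.W_pos M).ne'
  rw [wallisQuotient, wallisQuotient, Wallis.W_succ]
  push_cast
  field_simp
  ring

theorem wallisQuotient_le_four_div_pi (M : ℕ) : wallisQuotient M ≤ 4 / π := by
  have hW := Wallis.le_W M
  rw [wallisQuotient, div_le_iff₀ (Wallis.W_pos M)]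
  calc (2 * M + 1) / (M + 1) = 4 / π * ((2 * M + 1) / (2 * M + 2) * (π / 2)) := by
        field_simp; ring
    _ ≤ 4 / π * Wallis.W M := by gcongr

theorem tendsto_wallisQuotient :
    Tendsto wallisQuotient atTop (𝓝 (4 / π)) := by
  have hratio : Tendsto (fun M : ℕ ↦ (2 * M + 1 : ℝ) / (M + 1)) atTop (𝓝 2) := by
    simpa [add_comm] using tendsto_add_mul_div_add_mul_atTop_nhds (1 : ℝ) 1 2 one_ne_zero
  have hlimit : 4 / π = 2 / (π / 2) := by field_simp; norm_num
  rw [hlimit]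
  exact hratio.div Wallis.tendsto_W_nhds_pi_div_two (by positivity)

end WallisQuotient

section OddSquares

/-- The odd square `(2k+1)²`, the reciprocal of the weight of `k` in `t⋆(2,…,2)`. -/
noncomputable def oddSq (k : ℕ) : ℝ := (2 * (k : ℝ) + 1) ^ 2

theorem oddSq_pos (k : ℕ) : 0 < oddSq k := by unfold oddSq; positivity

theorem one_le_oddSq (k : ℕ) : 1 ≤ oddSq k :=
  one_le_pow₀ (le_add_of_nonneg_left (by positivity))

theorem oddSq_sub_oddSq (i k : ℕ) :
    oddSq i - oddSq k = 4 * (((i : ℝ) - k) * (k + 1 + i)) := by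
  unfold oddSq; ring

theorem oddSq_injective : Function.Injective oddSq := fun i k h ↦ by
  have hroot : 2 * (i : ℝ) + 1 = 2 * k + 1 :=
    (pow_left_inj₀ (by positivity) (by positivity) two_ne_zero).mp h
  simpa using hroot

theorem summable_inv_oddSq : Summable fun k ↦ (oddSq k)⁻¹ := by
  have h : Summable fun k : ℕ ↦ (((2 * k + 1 : ℕ) : ℝ) ^ 2)⁻¹ :=
    (Real.summable_nat_pow_inv.mpr one_lt_two).comp_injective
      (i := fun k : ℕ ↦ 2 * k + 1) fun _ _ h ↦ by simpa using h
  exact h.congr fun k ↦ by simp [oddSq]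

theorem prod_oddSq (k : ℕ) :
    ∏ i ∈ range k, oddSq i = ((2 * k)! / (2 ^ k * k !)) ^ 2 := by
  induction k with
  | zero => simp
  | succ k ih =>
    rw [prod_range_succ, ih, oddSq, Nat.mul_succ, Nat.factorial_succ, Nat.factorial_succ,
      Nat.factorial_succ, ← mul_pow]
    push_cast
    congr 1
    field_simp
    ring

theorem prod_oddSq_sub (k : ℕ) :
    ∏ i ∈ range k, (oddSq i - oddSq k) = (-4) ^ k * (2 * k)! := by
  have hfact : ∏ i ∈ range k, (k - i) * (k + 1 + i) = (2 * k)! := by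
    rw [prod_mul_distrib, ← Nat.descFactorial_eq_prod_range, ← Nat.ascFactorial_eq_prod_range,
      Nat.descFactorial_self, Nat.factorial_mul_ascFactorial, two_mul]
  rw [← hfact, Nat.cast_prod, pow_eq_prod_const, ← prod_mul_distrib]
  refine prod_congr rfl fun i hi ↦ ?_
  rw [oddSq_sub_oddSq]
  push_cast [(mem_range.mp hi).le]
  ring

/-- Closed form of `lagrangeWeight oddSq M k`, extended by `0` to `k > M` (where the falling
factorial vanishes). -/
noncomputable def oddSqWeight (M k : ℕ) : ℝ :=
  (-1) ^ k / (2 * k + 1) * wallisQuotient M *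
    (M.descFactorial k / (M + 2).ascFactorial k)

theorem lagrangeWeight_oddSq_self (k : ℕ) : lagrangeWeight oddSq k k = oddSqWeight k k := by
  have hasc : ((k + 1)! : ℝ) * (k + 2).ascFactorial k = (2 * k + 1)! := by
    rw [← Nat.cast_mul, Nat.factorial_mul_ascFactorial]; congr 2; ring
  rw [lagrangeWeight_self, prod_div_distrib, prod_oddSq, prod_oddSq_sub, oddSqWeight,
    wallisQuotient, Wallis.W_eq_factorial_ratio, Nat.descFactorial_self,
    eq_div_of_mul_eq (by positivity) ((mul_comm _ _).trans hasc), Nat.factorial_succ k,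
    Nat.factorial_succ (2 * k)]
  push_cast
  field_simp
  rw [mul_assoc, ← mul_pow, ← pow_mul, mul_comm k 2, pow_mul, pow_mul, ← mul_pow]
  norm_num

theorem oddSqWeight_succ {M k : ℕ} (hk : k ≤ M) :
    oddSqWeight (M + 1) k =
      oddSqWeight M k * (oddSq (M + 1) / (oddSq (M + 1) - oddSq k)) := by
  have hratio := succ_descFactorial_div_ascFactorial (n := M + 1) hk
  rw [oddSqWeight, oddSqWeight, wallisQuotient_succ, hratio, oddSq_sub_oddSq, oddSq]
  push_cast
  have hsub : (M : ℝ) + 1 - k ≠ 0 := sub_ne_zero.mpr (mod_cast (Nat.lt_succ_of_le hk).ne')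
  field_simp
  ring

theorem lagrangeWeight_oddSq {M k : ℕ} (hk : k ≤ M) :
    lagrangeWeight oddSq M k = oddSqWeight M k := by
  induction M, hk using Nat.le_induction with
  | base => exact lagrangeWeight_oddSq_self k
  | succ M hk ih => rw [lagrangeWeight_succ oddSq hk, ih, oddSqWeight_succ hk]

theorem oddSqWeight_eq_zero_of_lt {M k : ℕ} (hk : M < k) : oddSqWeight M k = 0 := by
  simp [oddSqWeight, Nat.descFactorial_of_lt hk]

theorem truncStarSum_inv_oddSq (d M : ℕ) :
    truncStarSum (fun k ↦ (oddSq k)⁻¹) d M = ∑' k, oddSqWeight M k * (oddSq k)⁻¹ ^ d := by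
  rw [truncStarSum_inv_eq_sum_lagrangeWeight oddSq_injective fun k ↦ (oddSq_pos k).ne',
    tsum_eq_sum (s := range (M + 1))]
  · exact sum_congr rfl fun k hk ↦ by rw [lagrangeWeight_oddSq (mem_range_succ_iff.mp hk)]
  · intro k hk
    rw [oddSqWeight_eq_zero_of_lt (by simpa using hk), zero_mul]

theorem abs_oddSqWeight_le_four_div_pi (M k : ℕ) : |oddSqWeight M k| ≤ 4 / π := by
  have hsign : |(-1 : ℝ) ^ k / (2 * k + 1)| ≤ 1 := by
    rw [abs_div, abs_neg_one_pow, abs_of_pos (by positivity)]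
    exact div_le_one_of_le₀ (le_add_of_nonneg_left (by positivity)) (by positivity)
  have hratio := descFactorial_div_ascFactorial_le_one (Nat.le_add_right M 2) k
  calc |oddSqWeight M k|
      = |(-1 : ℝ) ^ k / (2 * k + 1)| * wallisQuotient M *
          (M.descFactorial k / (M + 2).ascFactorial k) := by
        rw [oddSqWeight, abs_mul, abs_mul, abs_of_pos (wallisQuotient_pos M),
          abs_of_nonneg (a := (_ / Nat.cast _ : ℝ)) (by positivity)]
    _ ≤ 1 * (4 / π) * 1 := by
        gcongr
        · exact (wallisQuotient_pos M).le
        · exact wallisQuotient_le_four_div_pi M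
    _ = 4 / π := by ring

theorem tendsto_oddSqWeight (k : ℕ) :
    Tendsto (fun M ↦ oddSqWeight M k) atTop (𝓝 (4 / π * ((-1) ^ k / (2 * (k : ℝ) + 1)))) := by
  rw [mul_comm, ← mul_one (_ * _)]
  exact (tendsto_wallisQuotient.const_mul _).mul (tendsto_descFactorial_div_ascFactorial 2 k)

theorem tendsto_truncStarSum_inv_oddSq {d : ℕ} (hd : d ≠ 0) :
    Tendsto (truncStarSum (fun k ↦ (oddSq k)⁻¹) d) atTop
      (𝓝 (4 / π * ∑' k : ℕ, (-1 : ℝ) ^ k / (2 * (k : ℝ) + 1) ^ (2 * d + 1))) := by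
  have hdom (M k : ℕ) : ‖oddSqWeight M k * (oddSq k)⁻¹ ^ d‖ ≤ 4 / π * (oddSq k)⁻¹ := by
    have hpos := inv_pos.mpr (oddSq_pos k)
    rw [norm_mul, norm_pow, Real.norm_of_nonneg hpos.le]
    gcongr
    · exact abs_oddSqWeight_le_four_div_pi M k
    · exact pow_le_of_le_one hpos.le (inv_le_one_of_one_le₀ (one_le_oddSq k)) hd
  have hlim := tendsto_tsum_of_dominated_convergence (𝓕 := atTop)
    (summable_inv_oddSq.mul_left (4 / π))
    (fun k ↦ (tendsto_oddSqWeight k).mul_const ((oddSq k)⁻¹ ^ d))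
    (Eventually.of_forall hdom)
  have hterm (k : ℕ) : 4 / π * ((-1) ^ k / (2 * (k : ℝ) + 1)) * (oddSq k)⁻¹ ^ d =
      4 / π * ((-1) ^ k / (2 * (k : ℝ) + 1) ^ (2 * d + 1)) := by
    rw [oddSq, inv_pow, ← pow_mul, pow_succ]
    field_simp
  simp only [hterm, tsum_mul_left] at hlim
  exact hlim.congr fun M ↦ (truncStarSum_inv_oddSq d M).symm

end OddSquares

/-- For `d ≥ 1`, the multiple `t`-star value `t⋆(2,…,2)` of depth `d`, i.e.
`∑_{n₁ ≥ ⋯ ≥ n_d ≥ 0} ∏_{j=1}^d (2n_j+1)^{-2}`, equals `(4/π) β(2d+1)`,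
where `β` is the Dirichlet beta function. -/
theorem stmt4 (d : ℕ) (hd : 1 ≤ d) :
    (∑' n : {n : Fin d → ℕ // Antitone n},
      ∏ j : Fin d, ((2 * (n.1 j : ℝ) + 1) ^ 2)⁻¹) =
    (4 / π) * ∑' k : ℕ, (-1 : ℝ) ^ k / (2 * (k : ℝ) + 1) ^ (2 * d + 1) :=
  (hasSum_antitone_of_tendsto_truncStarSum (fun k ↦ (inv_pos.mpr (oddSq_pos k)).le)
    (tendsto_truncStarSum_inv_oddSq (Nat.one_le_iff_ne_zero.mp hd))).tsum_eq
end
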